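/- arXiv:2506.08374 — 9 statements merged into one kernel-verified Lean document; each statement's English description precedes it below -/
import Mathlib

section
/- Let τ > 0 and u ∈ ℝ^m. A point z ∈ ℝ^m belongs to Prox_{τg}(u) if and only if for every coordinate i ∈ {1,…,m}: z_i = 0 when u_i < √(2τμ); z_i ∈ {0, u_i} when u_i = √(2τμ); and z_i = u_i when u_i > √(2τμ). -/
open scoped RealInnerProductSpace
open Filter Topology

/- Number of nonzero coordinates of `z` (the "ℓ₀ norm"). -/
open Classical in
noncomputable def zeroNorm {m : ℕ} (z : EuclideanSpace ℝ (Fin m)) : ℕ :=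
  (Finset.univ.filter fun i => z i ≠ 0).card

/- `g(z) = μ‖z‖₀` if `z ≥ 0` componentwise, `+∞` otherwise. -/
open Classical in
noncomputable def gfun {m : ℕ} (μ : ℝ) (z : EuclideanSpace ℝ (Fin m)) : EReal :=
  if ∀ i, 0 ≤ z i then ((μ * zeroNorm z : ℝ) : EReal) else ⊤

/- The proximal set `Prox_{τ g}(u)`: minimizers of `g(z) + (1/(2τ))‖z - u‖²`. -/
noncomputable def proxSet {m : ℕ} (μ τ : ℝ) (u : EuclideanSpace ℝ (Fin m)) :
    Set (EuclideanSpace ℝ (Fin m)) :=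
  {z | ∀ w, gfun μ z + ((1 / (2 * τ) * ‖z - u‖ ^ 2 : ℝ) : EReal)
        ≤ gfun μ w + ((1 / (2 * τ) * ‖w - u‖ ^ 2 : ℝ) : EReal)}

/-! On the nonnegative orthant the proximal objective is a sum of functions of the single
coordinates, so a point minimizes it iff each coordinate `a = z i` minimizes the scalar function
`μ * 1_{a ≠ 0} + (a - u i) ^ 2 / (2 * τ)` on `[0, ∞)`. Its only candidate minimizers are `0`, with
value `u i ^ 2 / (2 * τ)`, and `u i` when `0 < u i`, with value `μ`; the two values agree exactly
at `u i = √(2 * τ * μ)`. -/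

theorem isMinOn_sum_pi_iff {ι M : Type*} [Fintype ι] {α : ι → Type*} [AddCommMonoid M]
    [PartialOrder M] [IsOrderedCancelAddMonoid M] {f : ∀ i, α i → M} {s : ∀ i, Set (α i)}
    {z : ∀ i, α i} (hz : z ∈ Set.univ.pi s) :
    IsMinOn (fun x : ∀ i, α i => ∑ i, f i (x i)) (Set.univ.pi s) z ↔
      ∀ i, IsMinOn (f i) (s i) (z i) := by
  classical
  simp only [isMinOn_iff]
  refine ⟨fun hmin i b hb => ?_,
    fun hmin x hx => Finset.sum_le_sum fun i _ => hmin i (x i) (hx i trivial)⟩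
  have hupdate : Function.update z i b ∈ Set.univ.pi s :=
    Set.update_mem_pi_iff_of_mem hz |>.2 fun _ => hb
  have hle := hmin _ hupdate
  have hrest : ∑ j ∈ {i}ᶜ, f j (Function.update z i b j) = ∑ j ∈ {i}ᶜ, f j (z j) :=
    Finset.sum_congr rfl fun j hj => by
      rw [Function.update_of_ne (by simpa using hj)]
  rw [Fintype.sum_eq_add_sum_compl i, Fintype.sum_eq_add_sum_compl i, hrest,
    Function.update_self] at hle
  exact le_of_add_le_add_right hle

/-- The contribution of one coordinate to the proximal objective: the penalty `μ` for a nonzero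
entry `a`, plus the quadratic distance of `a` to the target `v`. The constraint `0 ≤ a` is not part
of it and is imposed through the set on which it is minimized. -/
noncomputable def coordObjective (μ τ v a : ℝ) : ℝ :=
  (if a = 0 then 0 else μ) + (a - v) ^ 2 / (2 * τ)

section coordObjective

variable {μ τ v a : ℝ}

theorem coordObjective_zero : coordObjective μ τ v 0 = v ^ 2 / (2 * τ) := by
  simp [coordObjective]

theorem coordObjective_of_ne_zero (ha : a ≠ 0) :
    coordObjective μ τ v a = μ + (a - v) ^ 2 / (2 * τ) := by
  simp [coordObjective, ha]

theorem coordObjective_zero_le_iff (hτ : 0 < τ) (ha : a ≠ 0) :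
    coordObjective μ τ v 0 ≤ coordObjective μ τ v a ↔ 2 * a * v ≤ 2 * τ * μ + a ^ 2 := by
  rw [coordObjective_zero, coordObjective_of_ne_zero ha, div_le_iff₀ (by positivity), add_mul,
    div_mul_cancel₀ _ (by positivity)]
  constructor <;> intro h <;> linarith

theorem coordObjective_le_zero_iff (hτ : 0 < τ) (ha : a ≠ 0) :
    coordObjective μ τ v a ≤ coordObjective μ τ v 0 ↔ 2 * τ * μ + a ^ 2 ≤ 2 * a * v := by
  rw [coordObjective_zero, coordObjective_of_ne_zero ha, le_div_iff₀ (by positivity), add_mul,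
    div_mul_cancel₀ _ (by positivity)]
  constructor <;> intro h <;> linarith

theorem coordObjective_self (hv : v ≠ 0) : coordObjective μ τ v v = μ := by
  simp [coordObjective, hv]

theorem coordObjective_self_le (hτ : 0 < τ) (hv : v ≠ 0) (ha : a ≠ 0) :
    coordObjective μ τ v v ≤ coordObjective μ τ v a := by
  rw [coordObjective_self hv, coordObjective_of_ne_zero ha]
  exact le_add_of_nonneg_right (by positivity)

theorem eq_of_coordObjective_le_self (hτ : 0 < τ) (hv : v ≠ 0) (ha : a ≠ 0)
    (h : coordObjective μ τ v a ≤ coordObjective μ τ v v) : a = v := by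
  rw [coordObjective_self hv, coordObjective_of_ne_zero ha, add_le_iff_nonpos_right,
    div_le_iff₀ (by positivity), zero_mul, sq_nonpos_iff] at h
  exact sub_eq_zero.1 h

theorem isMinOn_coordObjective_zero_iff (hμ : 0 ≤ μ) (hτ : 0 < τ) :
    IsMinOn (coordObjective μ τ v) (Set.Ici 0) 0 ↔ v ≤ √(2 * τ * μ) := by
  rw [isMinOn_iff]
  constructor
  · intro hmin
    rcases le_or_gt v 0 with hv | hv
    · exact hv.trans (Real.sqrt_nonneg _)
    · have hle := (coordObjective_zero_le_iff hτ hv.ne').1 (hmin v hv.le)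
      exact Real.le_sqrt_of_sq_le (by linarith)
  · intro hv b (hb : 0 ≤ b)
    rcases eq_or_ne b 0 with rfl | hb0
    · rfl
    · refine (coordObjective_zero_le_iff hτ hb0).2 ?_
      calc 2 * b * v ≤ 2 * b * √(2 * τ * μ) := by gcongr
        _ ≤ b ^ 2 + √(2 * τ * μ) ^ 2 := two_mul_le_add_sq _ _
        _ = 2 * τ * μ + b ^ 2 := by rw [Real.sq_sqrt (by positivity), add_comm]

theorem isMinOn_coordObjective_iff_of_pos (hμ : 0 ≤ μ) (hτ : 0 < τ) (ha : 0 < a) :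
    IsMinOn (coordObjective μ τ v) (Set.Ici 0) a ↔ a = v ∧ √(2 * τ * μ) ≤ v := by
  rw [isMinOn_iff]
  constructor
  · intro hmin
    have hle_zero := (coordObjective_le_zero_iff hτ ha.ne').1 (hmin 0 Set.self_mem_Ici)
    have hv : 0 < v := by
      have hav : 0 < 2 * a * v := hle_zero.trans_lt' (by positivity)
      exact pos_of_mul_pos_right hav (by positivity)
    obtain rfl : a = v := eq_of_coordObjective_le_self hτ hv.ne' ha.ne' (hmin v hv.le)
    exact ⟨rfl, (Real.sqrt_le_left ha.le).2 (by linarith)⟩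
  · rintro ⟨rfl, hsqrt⟩ b -
    rcases eq_or_ne b 0 with rfl | hb0
    · have hsq := (Real.sqrt_le_left ha.le).1 hsqrt
      exact (coordObjective_le_zero_iff hτ ha.ne').2 (by linarith)
    · exact coordObjective_self_le hτ ha.ne' hb0

theorem nonneg_and_isMinOn_coordObjective_iff (hμ : 0 ≤ μ) (hτ : 0 < τ) :
    (0 ≤ a ∧ IsMinOn (coordObjective μ τ v) (Set.Ici 0) a) ↔
      (a = 0 ∧ v ≤ √(2 * τ * μ)) ∨ (a = v ∧ √(2 * τ * μ) ≤ v) := by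
  have hsqrt := Real.sqrt_nonneg (2 * τ * μ)
  rcases lt_trichotomy a 0 with ha | rfl | ha
  · grind
  · rw [isMinOn_coordObjective_zero_iff hμ hτ]
    grind
  · simp [isMinOn_coordObjective_iff_of_pos hμ hτ ha, ha.le, ha.ne']

end coordObjective

theorem trichotomy_imp_iff {α : Type*} [LinearOrder α] {p q : Prop} {v s : α} :
    ((v < s → p) ∧ (v = s → p ∨ q) ∧ (s < v → q)) ↔ (p ∧ v ≤ s) ∨ (q ∧ s ≤ v) := by
  rcases lt_trichotomy v s with h | rfl | h
  · simp [h, h.ne, h.le, h.not_gt, h.not_ge]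
  · simp
  · simp [h, h.ne', h.le, h.not_gt, h.not_ge]

section proxSet

variable {m : ℕ} {μ τ : ℝ} {u z : EuclideanSpace ℝ (Fin m)}

theorem gfun_eq_top (hz : ¬ ∀ i, 0 ≤ z i) : gfun μ z = ⊤ :=
  if_neg hz

theorem mul_zeroNorm_eq_sum (μ : ℝ) (z : EuclideanSpace ℝ (Fin m)) :
    μ * zeroNorm z = ∑ i, if z i = 0 then 0 else μ := by
  simp [zeroNorm, Finset.sum_ite, mul_comm]

theorem gfun_add_eq_sum_coordObjective (hz : ∀ i, 0 ≤ z i) :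
    gfun μ z + ((1 / (2 * τ) * ‖z - u‖ ^ 2 : ℝ) : EReal) =
      ((∑ i, coordObjective μ τ (u i) (z i) : ℝ) : EReal) := by
  rw [gfun, if_pos hz, ← EReal.coe_add, mul_zeroNorm_eq_sum, EuclideanSpace.real_norm_sq_eq,
    one_div_mul_eq_div, Finset.sum_div, ← Finset.sum_add_distrib]
  rfl

theorem nonneg_of_mem_proxSet (hz : z ∈ proxSet μ τ u) (i : Fin m) : 0 ≤ z i := by
  revert i
  by_contra hneg
  have htop := hz 0
  rw [gfun_eq_top hneg, EReal.top_add_coe, gfun_add_eq_sum_coordObjective fun _ => le_rfl] at htop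
  exact EReal.coe_ne_top _ (top_le_iff.1 htop)

theorem mem_proxSet_iff_isMinOn_sum (hz : ∀ i, 0 ≤ z i) :
    z ∈ proxSet μ τ u ↔
      IsMinOn (fun x : Fin m → ℝ => ∑ i, coordObjective μ τ (u i) (x i))
        (Set.univ.pi fun _ => Set.Ici 0) z := by
  rw [isMinOn_iff]
  constructor
  · intro hmin x hx
    have hle := hmin (WithLp.toLp 2 x)
    rwa [gfun_add_eq_sum_coordObjective hz,
      gfun_add_eq_sum_coordObjective fun i => hx i trivial, EReal.coe_le_coe_iff] at hle
  · intro hmin w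
    by_cases hw : ∀ i, 0 ≤ w i
    · rw [gfun_add_eq_sum_coordObjective hz, gfun_add_eq_sum_coordObjective hw,
        EReal.coe_le_coe_iff]
      exact hmin w fun i _ => hw i
    · rw [gfun_eq_top hw, EReal.top_add_coe]
      exact le_top

theorem mem_proxSet_iff_forall_isMinOn :
    z ∈ proxSet μ τ u ↔
      ∀ i, 0 ≤ z i ∧ IsMinOn (coordObjective μ τ (u i)) (Set.Ici 0) (z i) := by
  have hiff (hz : ∀ i, 0 ≤ z i) :
      z ∈ proxSet μ τ u ↔ ∀ i, IsMinOn (coordObjective μ τ (u i)) (Set.Ici 0) (z i) :=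
    (mem_proxSet_iff_isMinOn_sum hz).trans (isMinOn_sum_pi_iff fun i _ => hz i)
  rw [forall_and]
  exact ⟨fun h => ⟨nonneg_of_mem_proxSet h, (hiff (nonneg_of_mem_proxSet h)).1 h⟩,
    fun ⟨hz, hmin⟩ => (hiff hz).2 hmin⟩

end proxSet

/-- characterization of the proximal operator of `g`. -/
theorem stmt0 {m : ℕ} (μ τ : ℝ) (hμ : 0 < μ) (hτ : 0 < τ)
    (u z : EuclideanSpace ℝ (Fin m)) :
    z ∈ proxSet μ τ u ↔
      ∀ i : Fin m,
        (u i < Real.sqrt (2 * τ * μ) → z i = 0) ∧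
        (u i = Real.sqrt (2 * τ * μ) → z i = 0 ∨ z i = u i) ∧
        (Real.sqrt (2 * τ * μ) < u i → z i = u i) := by
  simp only [mem_proxSet_iff_forall_isMinOn, nonneg_and_isMinOn_coordObjective_iff hμ.le hτ,
    trichotomy_imp_iff]
end

section
/- Let z, u ∈ ℝ^m and τ > 0 be such that z ∈ Prox_{τg}(z + τu). Then for every τ' with 0 < τ' < τ, the set Prox_{τ'g}(z + τ'u) is a singleton and Prox_{τ'g}(z + τ'u) = {z}. -/
open scoped RealInnerProductSpace
open Filter Topology

/-!
With the prox centre at `z + τ • u`, the linear part of the quadratic penalty is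
`w ↦ -⟪w - z, u⟫`, whatever `τ` is. Passing from `τ` to `τ' < τ` therefore only adds
`(1 / (2 * τ') - 1 / (2 * τ)) * ‖w - z‖ ^ 2` to the objective, up to a constant, and a minimizer `z`
for `τ` becomes a strict minimizer for `τ'`.
-/

section ProximalSet

variable {E : Type*} [NormedAddCommGroup E]

/-- The proximal set `Prox_{τ f}(v)` of an arbitrary extended-real-valued function `f`;
`proxSet μ` is the case `f = gfun μ`. It is meant for `τ > 0`: at `τ = 0` the penalty is `0`, since
`1 / 0 = 0`. -/
def proximalSet (f : E → EReal) (τ : ℝ) (v : E) : Set E :=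
  {z | ∀ w, f z + ((1 / (2 * τ) * ‖z - v‖ ^ 2 : ℝ) : EReal)
        ≤ f w + ((1 / (2 * τ) * ‖w - v‖ ^ 2 : ℝ) : EReal)}

variable {f : E → EReal} {τ τ' : ℝ} {z u : E}

theorem ne_top_of_mem_proximalSet {v : E} (hz : z ∈ proximalSet f τ v) (hf : ∃ x, f x ≠ ⊤) :
    f z ≠ ⊤ := by
  obtain ⟨x, hx⟩ := hf
  intro hz_top
  have hle := hz x
  rw [hz_top, EReal.top_add_coe, top_le_iff] at hle
  exact EReal.add_ne_top hx (EReal.coe_ne_top _) hle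

variable [InnerProductSpace ℝ E]

theorem one_div_mul_norm_sub_add_smul_sq (hτ : τ ≠ 0) (z u w : E) :
    1 / (2 * τ) * ‖w - (z + τ • u)‖ ^ 2 =
      1 / (2 * τ) * ‖w - z‖ ^ 2 - ⟪w - z, u⟫ + τ / 2 * ‖u‖ ^ 2 := by
  rw [← sub_sub, norm_sub_sq_real, inner_smul_right, norm_smul, mul_pow, Real.norm_eq_abs, sq_abs]
  field_simp

theorem quadratic_growth_of_mem_proximalSet (hτ : τ ≠ 0) (hτ' : τ' ≠ 0)
    (hz : z ∈ proximalSet f τ (z + τ • u)) (w : E) :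
    f z + ((1 / (2 * τ') * ‖z - (z + τ' • u)‖ ^ 2
        + (1 / (2 * τ') - 1 / (2 * τ)) * ‖w - z‖ ^ 2 : ℝ) : EReal)
      ≤ f w + ((1 / (2 * τ') * ‖w - (z + τ' • u)‖ ^ 2 : ℝ) : EReal) := by
  let penalty (t : ℝ) (x : E) : ℝ := 1 / (2 * t) * ‖x - (z + t • u)‖ ^ 2
  have penalty_change : penalty τ' z + (1 / (2 * τ') - 1 / (2 * τ)) * ‖w - z‖ ^ 2 =
      penalty τ z + (penalty τ' w - penalty τ w) := by
    simp only [penalty, one_div_mul_norm_sub_add_smul_sq hτ,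
      one_div_mul_norm_sub_add_smul_sq hτ', sub_self, norm_zero, inner_zero_left]
    ring
  calc f z + ((penalty τ' z + (1 / (2 * τ') - 1 / (2 * τ)) * ‖w - z‖ ^ 2 : ℝ) : EReal)
      = f z + (penalty τ z : EReal) + ((penalty τ' w - penalty τ w : ℝ) : EReal) := by
        rw [penalty_change, EReal.coe_add, add_assoc]
    _ ≤ f w + (penalty τ w : EReal) + ((penalty τ' w - penalty τ w : ℝ) : EReal) :=
        add_le_add_left (hz w) _
    _ = f w + (penalty τ' w : EReal) := by
        rw [add_assoc, ← EReal.coe_add, add_sub_cancel]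

theorem mem_proximalSet_add_smul_of_le (hτ' : 0 < τ') (hle : τ' ≤ τ)
    (hz : z ∈ proximalSet f τ (z + τ • u)) : z ∈ proximalSet f τ' (z + τ' • u) := by
  intro w
  have coeff_nonneg : 0 ≤ 1 / (2 * τ') - 1 / (2 * τ) :=
    sub_nonneg.mpr (one_div_le_one_div_of_le (by positivity) (by gcongr))
  refine le_trans ?_
    (quadratic_growth_of_mem_proximalSet (hτ'.trans_le hle).ne' hτ'.ne' hz w)
  gcongr
  exact le_add_of_nonneg_right (by positivity)

theorem eq_of_mem_proximalSet_add_smul_of_lt (hz_bot : f z ≠ ⊥) (hz_top : f z ≠ ⊤)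
    (hτ' : 0 < τ') (hlt : τ' < τ) (hz : z ∈ proximalSet f τ (z + τ • u)) {w : E}
    (hw : w ∈ proximalSet f τ' (z + τ' • u)) : w = z := by
  have coeff_pos : 0 < 1 / (2 * τ') - 1 / (2 * τ) :=
    sub_pos.mpr (one_div_lt_one_div_of_lt (by positivity) (by gcongr))
  have growth_le :=
    (quadratic_growth_of_mem_proximalSet (hτ'.trans hlt).ne' hτ'.ne' hz w).trans (hw z)
  lift f z to ℝ using ⟨hz_top, hz_bot⟩ with fz
  have growth_nonpos : (1 / (2 * τ') - 1 / (2 * τ)) * ‖w - z‖ ^ 2 ≤ 0 := by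
    norm_cast at growth_le
    linarith
  have norm_sq_nonpos : ‖w - z‖ ^ 2 ≤ 0 := nonpos_of_mul_nonpos_right growth_nonpos coeff_pos
  rwa [sq_nonpos_iff, norm_eq_zero, sub_eq_zero] at norm_sq_nonpos

theorem stmt4_general (hf : ∃ x, f x ≠ ⊤) (hz_bot : f z ≠ ⊥)
    (hz : z ∈ proximalSet f τ (z + τ • u)) (hτ' : 0 < τ') (hlt : τ' < τ) :
    proximalSet f τ' (z + τ' • u) = {z} :=
  Set.eq_singleton_iff_unique_mem.mpr
    ⟨mem_proximalSet_add_smul_of_le hτ' hlt.le hz, fun _ hw =>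
      eq_of_mem_proximalSet_add_smul_of_lt hz_bot (ne_top_of_mem_proximalSet hz hf) hτ' hlt hz hw⟩

end ProximalSet

theorem gfun_ne_bot {m : ℕ} (μ : ℝ) (z : EuclideanSpace ℝ (Fin m)) : gfun μ z ≠ ⊥ := by
  unfold gfun
  split_ifs
  · exact EReal.coe_ne_bot _
  · exact top_ne_bot

theorem gfun_ne_top_of_nonneg {m : ℕ} (μ : ℝ) {z : EuclideanSpace ℝ (Fin m)}
    (hz : ∀ i, 0 ≤ z i) : gfun μ z ≠ ⊤ := by
  rw [gfun, if_pos hz]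
  exact EReal.coe_ne_top _

/-- if `z ∈ Prox_{τg}(z + τu)`, then for every `0 < τ' < τ` the set
`Prox_{τ'g}(z + τ'u)` is the singleton `{z}`. -/
theorem stmt4 {m : ℕ} (μ τ : ℝ) (hμ : 0 < μ) (hτ : 0 < τ)
    (z u : EuclideanSpace ℝ (Fin m))
    (hprox : z ∈ proxSet μ τ (z + τ • u)) :
    ∀ τ' : ℝ, 0 < τ' → τ' < τ → proxSet μ τ' (z + τ' • u) = {z} :=
  fun _ hτ' hlt => stmt4_general ⟨0, gfun_ne_top_of_nonneg μ fun _ => le_rfl⟩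
    (gfun_ne_bot μ z) hprox hτ' hlt
end

section
/- Let h : ℝ^m → ℝ be differentiable and F := h + g. If z* is a P-stationary point of min F (i.e. z* ∈ Prox_{τg}(z* − τ∇h(z*)) for some τ > 0), then z* is a KKT point (z* ≥ 0 componentwise and ∇h(z*)_i = 0 for every i with z*_i > 0). Conversely, if z* is a KKT point, then z* ∈ Prox_{τg}(z* − τ∇h(z*)) for every τ with 0 < τ < min{τ₁(z*), τ₂(−∇h(z*))}, where τ₁(z) := +∞ if z = 0 and min{ z_i²/(2μ) : z_i > 0 } otherwise, and τ₂(u) := +∞ if u ≤ 0 componentwise and min{ 2μ/u_i² : u_i > 0 } otherwise. -/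
open scoped RealInnerProductSpace
open Filter Topology

/-!
The proximal problem separates: over the nonnegative orthant its objective is a sum of functions of
one coordinate each, so `z ∈ Prox_{τg}(u)` holds exactly when every `z i` minimizes
`μ‖x‖₀ + (x - u i)² / (2τ)` over `x ≥ 0`. In one variable with target `v`, a positive minimizer is a
critical point of the quadratic part, hence equals `v`. Conversely `v > 0` competes only with `0`,
against which it wins once `2τμ ≤ v²`, while `0` is optimal if `v ≤ 0` or `v² ≤ 2τμ`. With
`u = z - τ∇h(z)`, a coordinate `z i > 0` equals its target `u i` iff `∇h(z) i = 0`, and the two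
thresholds become the bounds `τ₁` and `τ₂`.
-/

section Minimizers

open Set

theorem isMinOn_univ_ite_top_iff {α β : Type*} [PartialOrder β] [OrderTop β] {s : Set α}
    [DecidablePred (· ∈ s)] {f : α → β} (hf : ∃ w ∈ s, f w ≠ ⊤) {z : α} :
    IsMinOn (fun w => if w ∈ s then f w else ⊤) univ z ↔ z ∈ s ∧ IsMinOn f s z := by
  rw [isMinOn_univ_iff]
  constructor
  · intro hmin
    have hz : z ∈ s := by
      by_contra hz
      obtain ⟨w, hw, hfw⟩ := hf
      exact hfw (by simpa [hz, hw] using hmin w)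
    exact ⟨hz, fun w hw => by simpa [hz, hw] using hmin w⟩
  · rintro ⟨hz, hmin⟩ w
    by_cases hw : w ∈ s
    · simpa [hz, hw] using hmin hw
    · simp [hw]

theorem isMinOn_pi_sum_iff {ι M : Type*} [Fintype ι] {α : ι → Type*} [AddCommMonoid M]
    [PartialOrder M] [IsOrderedCancelAddMonoid M] {f : ∀ i, α i → M} {s : ∀ i, Set (α i)}
    {z : ∀ i, α i} (hz : z ∈ univ.pi s) :
    IsMinOn (fun w => ∑ i, f i (w i)) (univ.pi s) z ↔ ∀ i, IsMinOn (f i) (s i) (z i) := by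
  classical
  refine ⟨fun hmin i x hx => ?_, fun hmin w hw => ?_⟩
  · have hupdate : Function.update z i x ∈ univ.pi s :=
      update_mem_pi_iff_of_mem hz |>.2 fun _ => hx
    have hle : ∑ j, f j (z j) ≤ ∑ j, f j (Function.update z i x j) := hmin hupdate
    have hrest : ∑ j ∈ Finset.univ.erase i, f j (Function.update z i x j) =
        ∑ j ∈ Finset.univ.erase i, f j (z j) :=
      Finset.sum_congr rfl fun j hj => by rw [Function.update_of_ne (Finset.ne_of_mem_erase hj)]
    rw [← Finset.add_sum_erase _ _ (Finset.mem_univ i),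
      ← Finset.add_sum_erase _ (fun j => f j (Function.update z i x j)) (Finset.mem_univ i),
      hrest, Function.update_self] at hle
    exact le_of_add_le_add_right hle
  · exact Finset.sum_le_sum fun i _ => hmin i (hw i (mem_univ i))

end Minimizers

section Scalar

variable {μ τ v x : ℝ}

/-- The objective `μ‖x‖₀ + (x - v)² / (2τ)` of the proximal problem in a single coordinate. -/
noncomputable def scalarProxObjective (μ τ v x : ℝ) : ℝ :=
  (if x ≠ 0 then μ else 0) + 1 / (2 * τ) * (x - v) ^ 2

/-- The one-dimensional case of `proxSet`. The constraint `0 ≤ x` is part of the set, so that the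
objective is real-valued. -/
def scalarProxSet (μ τ v : ℝ) : Set ℝ :=
  {x | 0 ≤ x ∧ IsMinOn (scalarProxObjective μ τ v) (Set.Ici 0) x}

theorem scalarProxObjective_zero : scalarProxObjective μ τ v 0 = 1 / (2 * τ) * v ^ 2 := by
  simp [scalarProxObjective]

theorem scalarProxObjective_of_ne_zero (hx : x ≠ 0) :
    scalarProxObjective μ τ v x = μ + 1 / (2 * τ) * (x - v) ^ 2 := by
  rw [scalarProxObjective, if_pos hx]

-- Away from `0` the penalty is locally constant, so only the quadratic term contributes.
theorem hasDerivAt_scalarProxObjective (hx : x ≠ 0) :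
    HasDerivAt (scalarProxObjective μ τ v) ((x - v) / τ) x := by
  have hquadratic : HasDerivAt (fun y => μ + 1 / (2 * τ) * (y - v) ^ 2) ((x - v) / τ) x := by
    refine ((((hasDerivAt_id' x).sub_const v).pow 2).const_mul (1 / (2 * τ))).const_add μ
      |>.congr_deriv ?_
    simp only [Nat.cast_ofNat, Nat.reduceSub, pow_one, mul_one]
    field
  refine hquadratic.congr_of_eventuallyEq ?_
  filter_upwards [isOpen_ne.mem_nhds hx] with y hy
  exact scalarProxObjective_of_ne_zero hy

theorem eq_of_mem_scalarProxSet_of_pos (hτ : τ ≠ 0) (hx : 0 < x) (hmem : x ∈ scalarProxSet μ τ v) :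
    x = v := by
  have hlocal : IsLocalMin (scalarProxObjective μ τ v) x := hmem.2.isLocalMin (Ici_mem_nhds hx)
  have hderiv : (x - v) / τ = 0 :=
    hlocal.hasDerivAt_eq_zero (hasDerivAt_scalarProxObjective hx.ne')
  exact sub_eq_zero.1 ((div_eq_zero_iff.1 hderiv).resolve_right hτ)

theorem self_mem_scalarProxSet (hτ : 0 < τ) (hv : 0 < v) (hle : 2 * τ * μ ≤ v ^ 2) :
    v ∈ scalarProxSet μ τ v := by
  refine ⟨hv.le, isMinOn_iff.2 fun x _ => ?_⟩
  rw [scalarProxObjective_of_ne_zero hv.ne', sub_self, zero_pow two_ne_zero, mul_zero, add_zero]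
  obtain rfl | hx := eq_or_ne x 0
  · rwa [scalarProxObjective_zero, one_div_mul_eq_div, le_div_iff₀' (by positivity)]
  · rw [scalarProxObjective_of_ne_zero hx]
    exact le_add_of_nonneg_right (by positivity)

theorem zero_mem_scalarProxSet (hμ : 0 ≤ μ) (hτ : 0 < τ) (hle : 0 < v → v ^ 2 ≤ 2 * τ * μ) :
    0 ∈ scalarProxSet μ τ v := by
  refine ⟨le_rfl, isMinOn_iff.2 fun x (hx : 0 ≤ x) => ?_⟩
  obtain rfl | hx_ne := eq_or_ne x 0
  · exact le_rfl
  rw [scalarProxObjective_zero, scalarProxObjective_of_ne_zero hx_ne]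
  obtain hv | hv := le_or_gt v 0
  · have hdist : v ^ 2 ≤ (x - v) ^ 2 := by nlinarith
    exact le_add_of_nonneg_of_le hμ (by gcongr)
  · have hpenalty : 1 / (2 * τ) * v ^ 2 ≤ μ := by
      rw [one_div_mul_eq_div, div_le_iff₀' (by positivity)]
      exact hle hv
    exact le_add_of_le_of_nonneg hpenalty (by positivity)

theorem zero_mem_scalarProxSet_mul {d : ℝ} (hμ : 0 ≤ μ) (hτ : 0 < τ)
    (hle : 0 < d → τ ≤ 2 * μ / d ^ 2) : 0 ∈ scalarProxSet μ τ (τ * d) := by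
  refine zero_mem_scalarProxSet hμ hτ fun hτd => ?_
  have hd : 0 < d := (mul_pos_iff_of_pos_left hτ).1 hτd
  have hsq : τ * d ^ 2 ≤ 2 * μ := (le_div_iff₀ (pow_pos hd 2)).1 (hle hd)
  calc (τ * d) ^ 2 = τ * (τ * d ^ 2) := by ring
    _ ≤ τ * (2 * μ) := by gcongr
    _ = 2 * τ * μ := by ring

end Scalar

section ProxSet

variable {m : ℕ} {μ τ : ℝ} {u z : EuclideanSpace ℝ (Fin m)}

/-- The vectors with nonnegative coordinates: the effective domain of `gfun`. -/
def nonnegOrthant (m : ℕ) : Set (EuclideanSpace ℝ (Fin m)) :=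
  {w | ∀ i, 0 ≤ w i}

theorem mul_zeroNorm_add_norm_sub_sq_eq_sum (w : EuclideanSpace ℝ (Fin m)) :
    μ * zeroNorm w + 1 / (2 * τ) * ‖w - u‖ ^ 2 = ∑ i, scalarProxObjective μ τ (u i) (w i) := by
  simp only [scalarProxObjective, zeroNorm, Finset.sum_add_distrib, ← Finset.mul_sum,
    ← Finset.sum_filter, Finset.sum_const, nsmul_eq_mul, EuclideanSpace.real_norm_sq_eq,
    PiLp.sub_apply, mul_comm μ]

open Classical in
theorem gfun_add_eq_ite (w : EuclideanSpace ℝ (Fin m)) :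
    gfun μ w + ((1 / (2 * τ) * ‖w - u‖ ^ 2 : ℝ) : EReal) =
      if w ∈ nonnegOrthant m then
        ((∑ i, scalarProxObjective μ τ (u i) (w i) : ℝ) : EReal) else ⊤ := by
  rw [gfun, ite_add, ← EReal.coe_add, mul_zeroNorm_add_norm_sub_sq_eq_sum, EReal.top_add_coe]
  congr

theorem mem_proxSet_iff_isMinOn :
    z ∈ proxSet μ τ u ↔ z ∈ nonnegOrthant m ∧
      IsMinOn (fun w => ∑ i, scalarProxObjective μ τ (u i) (w i)) (nonnegOrthant m) z := by
  classical
  have hunconstrained : z ∈ proxSet μ τ u ↔ IsMinOn (fun w => if w ∈ nonnegOrthant m then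
      ((∑ i, scalarProxObjective μ τ (u i) (w i) : ℝ) : EReal) else ⊤) Set.univ z := by
    simp only [proxSet, Set.mem_ofPred_eq, gfun_add_eq_ite, isMinOn_univ_iff]
  have hfinite : ∃ w ∈ nonnegOrthant m,
      ((∑ i, scalarProxObjective μ τ (u i) (w i) : ℝ) : EReal) ≠ ⊤ :=
    ⟨0, fun _ => le_rfl, EReal.coe_ne_top _⟩
  rw [hunconstrained, isMinOn_univ_ite_top_iff hfinite]
  simp only [isMinOn_iff, EReal.coe_le_coe_iff]

theorem mem_proxSet_iff_forall_mem_scalarProxSet :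
    z ∈ proxSet μ τ u ↔ ∀ i, z i ∈ scalarProxSet μ τ (u i) := by
  rw [mem_proxSet_iff_isMinOn]
  simp only [scalarProxSet, nonnegOrthant, Set.mem_ofPred_eq, forall_and]
  refine and_congr_right fun hz => ?_
  have hz_mem : z.ofLp ∈ Set.univ.pi fun _ => Set.Ici 0 := fun i _ => hz i
  rw [← isMinOn_pi_sum_iff hz_mem]
  exact ⟨fun hmin w hw => hmin (a := WithLp.toLp 2 w) fun i => hw i trivial,
    fun hmin w hw => hmin (a := w.ofLp) fun i _ => hw i⟩

end ProxSet

/-- a P-stationary point of `min h + g` is a KKT point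
(`z* ≥ 0` and `∇h(z*)ᵢ = 0` whenever `z*ᵢ > 0`); conversely a KKT point is
P-stationary for every `0 < τ < min{τ₁(z*), τ₂(−∇h(z*))}`, the bound being
expressed coordinatewise. -/
theorem stmt8 {m : ℕ} (μ : ℝ) (hμ : 0 < μ)
    (h : EuclideanSpace ℝ (Fin m) → ℝ)
    (h' : EuclideanSpace ℝ (Fin m) → EuclideanSpace ℝ (Fin m))
    (hdiff : ∀ z, HasGradientAt h (h' z) z)
    (zstar : EuclideanSpace ℝ (Fin m)) :
    ((∃ τ : ℝ, 0 < τ ∧ zstar ∈ proxSet μ τ (zstar - τ • h' zstar)) →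
      (∀ i, 0 ≤ zstar i) ∧ (∀ i, 0 < zstar i → h' zstar i = 0)) ∧
    (((∀ i, 0 ≤ zstar i) ∧ (∀ i, 0 < zstar i → h' zstar i = 0)) →
      ∀ τ : ℝ, 0 < τ →
        (∀ i, 0 < zstar i → τ < (zstar i) ^ 2 / (2 * μ)) →
        (∀ i, 0 < (-(h' zstar)) i → τ < 2 * μ / ((-(h' zstar)) i) ^ 2) →
        zstar ∈ proxSet μ τ (zstar - τ • h' zstar)) := by
  constructor
  · rintro ⟨τ, hτ, hprox⟩
    rw [mem_proxSet_iff_forall_mem_scalarProxSet] at hprox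
    refine ⟨fun i => (hprox i).1, fun i hi => ?_⟩
    have hfixed : zstar i = zstar i - τ * h' zstar i :=
      eq_of_mem_scalarProxSet_of_pos hτ.ne' hi (hprox i)
    simpa [hτ.ne'] using sub_eq_self.1 hfixed.symm
  · rintro ⟨hnonneg, hgrad⟩ τ hτ hτ₁ hτ₂
    refine mem_proxSet_iff_forall_mem_scalarProxSet.2 fun i => ?_
    rcases (hnonneg i).eq_or_lt with hzero | hpos
    · have hu : (zstar - τ • h' zstar) i = τ * (-(h' zstar)) i := by simp [← hzero]
      rw [hu, ← hzero]
      exact zero_mem_scalarProxSet_mul hμ.le hτ fun hd => (hτ₂ i hd).le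
    · have hu : (zstar - τ • h' zstar) i = zstar i := by simp [hgrad i hpos]
      rw [hu]
      refine self_mem_scalarProxSet hτ hpos ?_
      have hsq : τ * (2 * μ) < zstar i ^ 2 := (lt_div_iff₀ (by positivity)).1 (hτ₁ i hpos)
      linarith
end

section
/- Let h : ℝ^m → ℝ be differentiable with ℓ_h-Lipschitz gradient (ℓ_h > 0) and F := h + g. If z* is a global minimizer of F over ℝ^m, then for every τ with 0 < τ < 1/ℓ_h, z* ∈ Prox_{τg}(z* − τ∇h(z*)). -/
open scoped RealInnerProductSpace
open Filter Topology

/-!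
By the descent lemma, `h` minus its value at the minimizer `z` is bounded above by the quadratic
`w ↦ ⟪∇h z, w - z⟫ + ‖w - z‖² / (2τ)` as soon as `τ ℓ ≤ 1`. Completing the square, this quadratic is
the increment from `z` of the proximal penalty `w ↦ ‖w - (z - τ ∇h z)‖² / (2τ)`. Replacing `h` by
a function whose increments from `z` are at least as large keeps `z` a minimizer, whatever the
other summand `g` is.
-/

theorem image_sub_le_of_hasDerivWithinAt_le_affine {φ φ' : ℝ → ℝ} {a b p c : ℝ} (hab : a ≤ b)
    (hφ : ∀ t ∈ Set.Icc a b, HasDerivWithinAt φ (φ' t) (Set.Icc a b) t)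
    (hφ' : ∀ t ∈ Set.Ico a b, φ' t ≤ p + c * (t - a)) :
    φ b - φ a ≤ p * (b - a) + c / 2 * (b - a) ^ 2 := by
  let B : ℝ → ℝ := fun t ↦ φ a + (p * (t - a) + c / 2 * (t - a) ^ 2)
  have hB (t : ℝ) : HasDerivAt B (p + c * (t - a)) t := by
    have hsub : HasDerivAt (fun t ↦ t - a) 1 t := (hasDerivAt_id t).sub_const a
    refine (((hsub.const_mul p).add
      ((hsub.pow 2).const_mul (c / 2))).const_add (φ a)).congr_deriv ?_
    push_cast
    ring
  have hend : φ b ≤ B b :=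
    image_le_of_deriv_right_le_deriv_boundary (fun t ht ↦ (hφ t ht).continuousWithinAt)
      (fun t ht ↦ (hφ t (Set.Ico_subset_Icc_self ht)).mono_of_mem_nhdsWithin
        (Icc_mem_nhdsGE_of_mem ht))
      (by simp [B]) (fun t _ ↦ (hB t).continuousAt.continuousWithinAt)
      (fun t _ ↦ (hB t).hasDerivWithinAt) hφ' (Set.right_mem_Icc.2 hab)
  exact sub_le_iff_le_add'.2 hend

theorem image_sub_le_of_norm_fderiv_sub_le {E : Type*} [NormedAddCommGroup E] [NormedSpace ℝ E]
    {f : E → ℝ} {f' : E → E →L[ℝ] ℝ} {x y : E} {L : ℝ}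
    (hf : ∀ z ∈ segment ℝ x y, HasFDerivWithinAt f (f' z) (segment ℝ x y) z)
    (hlip : ∀ z ∈ segment ℝ x y, ‖f' z - f' x‖ ≤ L * ‖z - x‖) :
    f y - f x ≤ f' x (y - x) + L / 2 * ‖y - x‖ ^ 2 := by
  let γ : ℝ → E := AffineMap.lineMap x y
  have hγ : Set.MapsTo γ (Set.Icc 0 1) (segment ℝ x y) := fun t ht ↦ lineMap_mem_segment ℝ x y ht
  have hfγ : ∀ t ∈ Set.Icc (0 : ℝ) 1,
      HasDerivWithinAt (f ∘ γ) (f' (γ t) (y - x)) (Set.Icc 0 1) t := fun t ht ↦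
    (hf (γ t) (hγ ht)).comp_hasDerivWithinAt t AffineMap.hasDerivWithinAt_lineMap hγ
  have hslope : ∀ t ∈ Set.Ico (0 : ℝ) 1,
      f' (γ t) (y - x) ≤ f' x (y - x) + L * ‖y - x‖ ^ 2 * (t - 0) := by
    intro t ht
    have hdist : ‖γ t - x‖ = t * ‖y - x‖ := by
      rw [← dist_eq_norm, dist_lineMap_left, Real.norm_of_nonneg ht.1, dist_eq_norm']
    calc f' (γ t) (y - x) = f' x (y - x) + (f' (γ t) - f' x) (y - x) := by simp
      _ ≤ f' x (y - x) + ‖f' (γ t) - f' x‖ * ‖y - x‖ := by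
        gcongr
        exact (le_abs_self _).trans ((f' (γ t) - f' x).le_opNorm _)
      _ ≤ f' x (y - x) + L * ‖γ t - x‖ * ‖y - x‖ := by
        gcongr
        exact hlip _ (hγ (Set.Ico_subset_Icc_self ht))
      _ = f' x (y - x) + L * ‖y - x‖ ^ 2 * (t - 0) := by rw [hdist]; ring
  have hincr := image_sub_le_of_hasDerivWithinAt_le_affine zero_le_one hfγ hslope
  simp only [Function.comp_apply, γ, AffineMap.lineMap_apply_one,
    AffineMap.lineMap_apply_zero] at hincr
  linarith

theorem isMinOn_add_coe_of_sub_le_sub {α : Type*} {s : Set α} {a : α} {f q : α → ℝ} {g : α → EReal}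
    (hmin : IsMinOn (fun x ↦ (f x : EReal) + g x) s a)
    (hfq : ∀ x ∈ s, f x - f a ≤ q x - q a) :
    IsMinOn (fun x ↦ g x + (q x : EReal)) s a := by
  refine isMinOn_iff.2 fun x hx ↦ ?_
  calc g a + (q a : EReal) = (f a + g a) + ((q a - f a : ℝ) : EReal) := by
        rw [add_comm (f a : EReal), add_assoc, ← EReal.coe_add, add_sub_cancel]
    _ ≤ (f x + g x) + ((q a - f a : ℝ) : EReal) :=
        add_le_add_left (isMinOn_iff.1 hmin x hx) _
    _ = g x + ((f x + (q a - f a) : ℝ) : EReal) := by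
        rw [add_comm (f x : EReal), add_assoc, ← EReal.coe_add]
    _ ≤ g x + (q x : EReal) := by
        gcongr
        linarith [hfq x hx]

section InnerProductSpace

variable {E : Type*} [NormedAddCommGroup E] [InnerProductSpace ℝ E]

theorem norm_sub_gradient_step_sq_sub {τ : ℝ} (hτ : τ ≠ 0) (z v w : E) :
    1 / (2 * τ) * ‖w - (z - τ • v)‖ ^ 2 - 1 / (2 * τ) * ‖z - (z - τ • v)‖ ^ 2 =
      ⟪v, w - z⟫ + 1 / (2 * τ) * ‖w - z‖ ^ 2 := by
  rw [sub_sub_cancel, ← sub_add, norm_add_sq_real, real_inner_smul_right, real_inner_comm]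
  field_simp
  ring

theorem stmt10_general [CompleteSpace E] {h : E → ℝ} {h' : E → E} {g : E → EReal} {z : E}
    {ℓ τ : ℝ} (hdiff : ∀ x, HasGradientAt h (h' x) x)
    (hlip : ∀ x, ‖h' x - h' z‖ ≤ ℓ * ‖x - z‖)
    (hmin : IsMinOn (fun x ↦ (h x : EReal) + g x) Set.univ z) (hτ : 0 < τ) (hτℓ : τ * ℓ ≤ 1) :
    IsMinOn (fun w ↦ g w + ((1 / (2 * τ) * ‖w - (z - τ • h' z)‖ ^ 2 : ℝ) : EReal))
      Set.univ z := by
  refine isMinOn_add_coe_of_sub_le_sub hmin fun w _ ↦ ?_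
  have hcurv : ℓ / 2 ≤ 1 / (2 * τ) := by
    rw [div_le_div_iff₀ two_pos (by positivity)]
    linarith
  calc h w - h z ≤ ⟪h' z, w - z⟫ + ℓ / 2 * ‖w - z‖ ^ 2 :=
        image_sub_le_of_norm_fderiv_sub_le (f' := fun x ↦ InnerProductSpace.toDual ℝ E (h' x))
          (fun x _ ↦ (hdiff x).hasFDerivAt.hasFDerivWithinAt)
          (fun x _ ↦ by simpa only [← map_sub, LinearIsometryEquiv.norm_map] using hlip x)
    _ ≤ ⟪h' z, w - z⟫ + 1 / (2 * τ) * ‖w - z‖ ^ 2 := by gcongr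
    _ = _ := (norm_sub_gradient_step_sq_sub hτ.ne' z (h' z) w).symm

end InnerProductSpace

/-- a global minimizer of `F = h + g` (with `∇h` being
`ℓ_h`-Lipschitz) is a P-stationary point for every `τ ∈ (0, 1/ℓ_h)`. -/
theorem stmt10 {m : ℕ} (μ ℓh : ℝ) (hμ : 0 < μ) (hℓ : 0 < ℓh)
    (h : EuclideanSpace ℝ (Fin m) → ℝ)
    (h' : EuclideanSpace ℝ (Fin m) → EuclideanSpace ℝ (Fin m))
    (hdiff : ∀ z, HasGradientAt h (h' z) z)
    (hlip : ∀ x y, ‖h' x - h' y‖ ≤ ℓh * ‖x - y‖)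
    (zstar : EuclideanSpace ℝ (Fin m))
    (hmin : ∀ z, (h zstar : EReal) + gfun μ zstar ≤ (h z : EReal) + gfun μ z) :
    ∀ τ : ℝ, 0 < τ → τ < 1 / ℓh →
      zstar ∈ proxSet μ τ (zstar - τ • h' zstar) := by
  intro τ hτ hτℓ w
  exact stmt10_general hdiff (hlip · zstar) (fun z _ ↦ hmin z) hτ ((lt_div_iff₀ hℓ).1 hτℓ).le
    (Set.mem_univ w)
end

section
/- Let h : ℝ^m → ℝ be differentiable and σ_h-strongly convex (σ_h > 0) and F := h + g. If z* ∈ Prox_{τg}(z* − τ∇h(z*)) for some τ > 1/σ_h, then z* is the unique global minimizer of F; more precisely, F(z) − F(z*) ≥ (σ_h/2 − 1/(2τ))‖z − z*‖² for all z ∈ ℝ^m. -/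
open scoped RealInnerProductSpace
open Filter Topology

/-!
Completing the square shows that `z ∈ Prox_{τg}(z - τv)` means exactly that `-v` is a subgradient
of `g` at `z` up to the defect `(1/(2τ))‖· - z‖²`. Adding the strong subgradient inequality
for `h`, the linear terms `±v` cancel, and the surplus `(σ/2)‖· - z‖²` beats the defect because
`τ > 1/σ`.
-/

section InnerProductSpace

variable {E : Type*} [NormedAddCommGroup E] [InnerProductSpace ℝ E]

/-- `v` is a subgradient of `f` at `x` with quadratic modulus `σ`: a strong subgradient for
`0 < σ`, an ordinary one for `σ = 0` and a (global) proximal subgradient for `σ < 0`. Only real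
numbers are added to `f x`, so the values `⊤` and `⊥` need no separate treatment. -/
def HasQuadraticMinorantAt (f : E → EReal) (σ : ℝ) (v x : E) : Prop :=
  ∀ z, f x + ((⟪v, z - x⟫ + σ / 2 * ‖z - x‖ ^ 2 : ℝ) : EReal) ≤ f z

/-- The proximal set `Prox_{τg}(u)` of an arbitrary extended-real-valued function `g`, which
generalizes `proxSet`. -/
def proximalPoints (g : E → EReal) (τ : ℝ) (u : E) : Set E :=
  {z | ∀ w, g z + ((1 / (2 * τ) * ‖z - u‖ ^ 2 : ℝ) : EReal)
    ≤ g w + ((1 / (2 * τ) * ‖w - u‖ ^ 2 : ℝ) : EReal)}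

theorem hasQuadraticMinorantAt_coe_iff {h : E → ℝ} {σ : ℝ} {v x : E} :
    HasQuadraticMinorantAt (fun z ↦ (h z : EReal)) σ v x ↔
      ∀ z, ⟪v, z - x⟫ + σ / 2 * ‖z - x‖ ^ 2 ≤ h z - h x := by
  refine forall_congr' fun z ↦ ?_
  rw [← EReal.coe_add, EReal.coe_le_coe_iff, le_sub_iff_add_le']

namespace HasQuadraticMinorantAt

variable {f g : E → EReal} {σ ρ : ℝ} {v w x z : E}

theorem add (hf : HasQuadraticMinorantAt f σ v x) (hg : HasQuadraticMinorantAt g ρ w x) :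
    HasQuadraticMinorantAt (f + g) (σ + ρ) (v + w) x := by
  intro z
  have split : ⟪v + w, z - x⟫ + (σ + ρ) / 2 * ‖z - x‖ ^ 2 =
      (⟪v, z - x⟫ + σ / 2 * ‖z - x‖ ^ 2) + (⟪w, z - x⟫ + ρ / 2 * ‖z - x‖ ^ 2) := by
    rw [inner_add_left]
    ring
  rw [split, EReal.coe_add, Pi.add_apply, Pi.add_apply, add_add_add_comm]
  exact add_le_add (hf z) (hg z)

theorem ne_top (hf : HasQuadraticMinorantAt f σ v x) (hdom : ∃ z, f z ≠ ⊤) : f x ≠ ⊤ := by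
  obtain ⟨z, hz⟩ := hdom
  intro hx
  have top_le := hf z
  rw [hx, EReal.top_add_coe] at top_le
  exact hz (top_le_iff.mp top_le)

theorem quadratic_growth (hf : HasQuadraticMinorantAt f σ 0 x) (hbot : f x ≠ ⊥) (htop : f x ≠ ⊤)
    (z : E) : ((σ / 2 * ‖z - x‖ ^ 2 : ℝ) : EReal) ≤ f z - f x := by
  rw [EReal.le_sub_iff_add_le (.inl hbot) (.inl htop), add_comm]
  simpa only [inner_zero_left, zero_add] using hf z

theorem lt_of_ne (hf : HasQuadraticMinorantAt f σ 0 x) (hσ : 0 < σ) (hbot : f x ≠ ⊥)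
    (htop : f x ≠ ⊤) (hz : z ≠ x) : f x < f z := by
  have dist_pos : 0 < ‖z - x‖ := norm_sub_pos_iff.mpr hz
  have gap_pos : (0 : EReal) < ((σ / 2 * ‖z - x‖ ^ 2 : ℝ) : EReal) := by
    exact_mod_cast (by positivity : 0 < σ / 2 * ‖z - x‖ ^ 2)
  exact EReal.sub_pos.mp (gap_pos.trans_le (hf.quadratic_growth hbot htop z))

end HasQuadraticMinorantAt

theorem mem_proximalPoints_sub_smul_iff {g : E → EReal} {τ : ℝ} (hτ : τ ≠ 0) {v x : E} :
    x ∈ proximalPoints g τ (x - τ • v) ↔ HasQuadraticMinorantAt g (-(1 / τ)) (-v) x := by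
  refine forall_congr' fun w ↦ ?_
  have complete_square : 1 / (2 * τ) * ‖x - (x - τ • v)‖ ^ 2 =
      (⟪-v, w - x⟫ + -(1 / τ) / 2 * ‖w - x‖ ^ 2) + 1 / (2 * τ) * ‖w - (x - τ • v)‖ ^ 2 := by
    rw [sub_sub_cancel, ← sub_add, norm_add_sq_real, inner_smul_right, inner_neg_left,
      real_inner_comm]
    field_simp
    ring
  rw [complete_square, EReal.coe_add, ← add_assoc,
    (EReal.addLECancellable_coe _).add_le_add_iff_right]

theorem stmt11_general {g : E → EReal} {h : E → ℝ} {σ τ : ℝ} {v x : E} (hbot : g x ≠ ⊥)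
    (hdom : ∃ z, g z ≠ ⊤) (hσ : 0 < σ) (hτ : 1 / σ < τ)
    (hsub : HasQuadraticMinorantAt (fun z ↦ (h z : EReal)) σ v x)
    (hprox : x ∈ proximalPoints g τ (x - τ • v)) :
    (∀ z, (((σ / 2 - 1 / (2 * τ)) * ‖z - x‖ ^ 2 : ℝ) : EReal) ≤
        ((h z : EReal) + g z) - ((h x : EReal) + g x)) ∧
    (∀ z, z ≠ x → (h x : EReal) + g x < (h z : EReal) + g z) := by
  have hτ_pos : 0 < τ := (one_div_pos.mpr hσ).trans hτ
  have modulus_pos : 0 < σ + -(1 / τ) := by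
    linarith [(one_div_lt hσ hτ_pos).mp hτ]
  have hg := (mem_proximalPoints_sub_smul_iff hτ_pos.ne').mp hprox
  have hF : HasQuadraticMinorantAt ((fun z ↦ (h z : EReal)) + g) (σ + -(1 / τ)) 0 x := by
    simpa only [add_neg_cancel] using hsub.add hg
  have hF_bot : (h x : EReal) + g x ≠ ⊥ := EReal.add_ne_bot_iff.mpr ⟨EReal.coe_ne_bot _, hbot⟩
  have hF_top : (h x : EReal) + g x ≠ ⊤ := EReal.add_ne_top (EReal.coe_ne_top _) (hg.ne_top hdom)
  have modulus_half : σ / 2 - 1 / (2 * τ) = (σ + -(1 / τ)) / 2 := by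
    ring
  rw [modulus_half]
  exact ⟨hF.quadratic_growth hF_bot hF_top, fun z ↦ hF.lt_of_ne modulus_pos hF_bot hF_top⟩

end InnerProductSpace

theorem gfun_ne_top_iff {m : ℕ} {μ : ℝ} {z : EuclideanSpace ℝ (Fin m)} :
    gfun μ z ≠ ⊤ ↔ ∀ i, 0 ≤ z i := by
  unfold gfun
  split_ifs with hz
  · exact iff_of_true (EReal.coe_ne_top _) hz
  · exact iff_of_false (not_not_intro rfl) hz

/-- if `h` is differentiable and `σ_h`-strongly convex and `z*` is
P-stationary with some `τ > 1/σ_h`, then `z*` is the unique global minimizer of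
`F = h + g`, with the quadratic growth `F(z) − F(z*) ≥ (σ_h/2 − 1/(2τ))‖z − z*‖²`. -/
theorem stmt11 {m : ℕ} (μ σh τ : ℝ) (hμ : 0 < μ) (hσ : 0 < σh)
    (h : EuclideanSpace ℝ (Fin m) → ℝ)
    (h' : EuclideanSpace ℝ (Fin m) → EuclideanSpace ℝ (Fin m))
    (hdiff : ∀ z, HasGradientAt h (h' z) z)
    (hsc : ∀ z z' : EuclideanSpace ℝ (Fin m),
      ⟪h' z', z - z'⟫ + σh / 2 * ‖z - z'‖ ^ 2 ≤ h z - h z')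
    (zstar : EuclideanSpace ℝ (Fin m)) (hτ : 1 / σh < τ)
    (hstat : zstar ∈ proxSet μ τ (zstar - τ • h' zstar)) :
    (∀ z, (((σh / 2 - 1 / (2 * τ)) * ‖z - zstar‖ ^ 2 : ℝ) : EReal) ≤
        ((h z : EReal) + gfun μ z) - ((h zstar : EReal) + gfun μ zstar)) ∧
    (∀ z, z ≠ zstar →
        (h zstar : EReal) + gfun μ zstar < (h z : EReal) + gfun μ z) := by
  exact stmt11_general (gfun_ne_bot μ zstar) ⟨0, gfun_ne_top_iff.mpr fun _ ↦ le_rfl⟩ hσ hτ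
    (hasQuadraticMinorantAt_coe_iff.mpr fun z ↦ hsc z zstar) hstat
end

section
/- Let h : ℝ^m → ℝ be differentiable with ℓ_h-Lipschitz gradient (ℓ_h > 0), F := h + g, and let 0 < τ < 1/ℓ_h. If v ∈ Prox_{τg}(z − τ∇h(z)) for some z ∈ ℝ^m, then F(z) − F(v) ≥ (1/(2τ) − ℓ_h/2)‖v − z‖² (as an inequality in ℝ ∪ {+∞}). -/
open scoped RealInnerProductSpace
open Filter Topology

/-!
Completing the square, `v` minimizes `w ↦ g w + ⟪∇h z, w - z⟫ + ‖w - z‖² / (2τ)`; comparing its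
value at `v` with its value `g z` at `z` bounds the change of `g`. The quadratic upper bound for `h`
at `z` bounds the change of `h`, and the inner products cancel in the sum.
-/

section DescentLemma

open Set

theorem image_le_quadratic_of_deriv_le_affine {φ φ' : ℝ → ℝ} {a b s L : ℝ} (hab : a ≤ b)
    (hφ : ∀ t ∈ Icc a b, HasDerivAt φ (φ' t) t)
    (hφ' : ∀ t ∈ Ico a b, φ' t ≤ s + L * (t - a)) :
    φ b ≤ φ a + s * (b - a) + L / 2 * (b - a) ^ 2 := by
  have hquad (t : ℝ) : HasDerivAt (fun t ↦ φ a + s * (t - a) + L / 2 * (t - a) ^ 2)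
      (s + L * (t - a)) t := by
    have hsub : HasDerivAt (fun t : ℝ ↦ t - a) 1 t := (hasDerivAt_id t).sub_const a
    refine (((hsub.const_mul s).const_add (φ a)).add
      ((hsub.pow 2).const_mul (L / 2))).congr_deriv ?_
    push_cast
    ring
  exact image_le_of_deriv_right_le_deriv_boundary
    (fun t ht ↦ (hφ t ht).continuousAt.continuousWithinAt)
    (fun t ht ↦ (hφ t (Ico_subset_Icc_self ht)).hasDerivWithinAt)
    (by simp)
    (fun t _ ↦ (hquad t).continuousAt.continuousWithinAt)
    (fun t _ ↦ (hquad t).hasDerivWithinAt)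
    hφ' (right_mem_Icc.2 hab)

variable {E : Type*} [NormedAddCommGroup E] [InnerProductSpace ℝ E] [CompleteSpace E]

theorem hasDerivAt_comp_add_smul_of_hasGradientAt {h : E → ℝ} {p x d : E} {t : ℝ}
    (hgrad : HasGradientAt h p (x + t • d)) :
    HasDerivAt (fun t : ℝ ↦ h (x + t • d)) ⟪p, d⟫ t := by
  have hline : HasDerivAt (fun t : ℝ ↦ x + t • d) d t := by
    simpa using ((hasDerivAt_id t).smul_const d).const_add x
  exact (hgrad.hasFDerivAt.comp_hasDerivAt t hline).congr_deriv (by simp)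

theorem le_add_inner_add_sq_of_lipschitz_gradient {h : E → ℝ} {h' : E → E} {L : ℝ} {x : E}
    (hgrad : ∀ y, HasGradientAt h (h' y) y)
    (hlip : ∀ y, ‖h' y - h' x‖ ≤ L * ‖y - x‖) (y : E) :
    h y ≤ h x + ⟪h' x, y - x⟫ + L / 2 * ‖y - x‖ ^ 2 := by
  set d := y - x with hd
  have hslope : ∀ t ∈ Ico (0 : ℝ) 1,
      ⟪h' (x + t • d), d⟫ ≤ ⟪h' x, d⟫ + L * ‖d‖ ^ 2 * (t - 0) := by
    intro t ht
    have hnorm : ‖h' (x + t • d) - h' x‖ ≤ L * (t * ‖d‖) := by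
      simpa [norm_smul, abs_of_nonneg ht.1] using hlip (x + t • d)
    calc ⟪h' (x + t • d), d⟫ = ⟪h' x, d⟫ + ⟪h' (x + t • d) - h' x, d⟫ := by
          rw [inner_sub_left]; ring
      _ ≤ ⟪h' x, d⟫ + ‖h' (x + t • d) - h' x‖ * ‖d‖ := by
          gcongr; exact real_inner_le_norm _ _
      _ ≤ ⟪h' x, d⟫ + L * (t * ‖d‖) * ‖d‖ := by gcongr
      _ = ⟪h' x, d⟫ + L * ‖d‖ ^ 2 * (t - 0) := by ring
  have hbound := image_le_quadratic_of_deriv_le_affine zero_le_one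
    (fun t _ ↦ hasDerivAt_comp_add_smul_of_hasGradientAt (hgrad (x + t • d))) hslope
  have hy : x + d = y := by rw [hd, add_sub_cancel]
  simp only [one_smul, zero_smul, add_zero, sub_zero, one_pow, mul_one, hy] at hbound
  linarith

end DescentLemma

section Prox

variable {E : Type*} [NormedAddCommGroup E]

/-- `IsProx g τ u v` says that `v ∈ Prox_{τg}(u)` for an arbitrary extended-real-valued `g`; the set
`proxSet μ τ u` consists of the `v` with `IsProx (gfun μ) τ u v`. -/
def IsProx (g : E → EReal) (τ : ℝ) (u v : E) : Prop :=
  ∀ w, g v + ((1 / (2 * τ) * ‖v - u‖ ^ 2 : ℝ) : EReal)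
    ≤ g w + ((1 / (2 * τ) * ‖w - u‖ ^ 2 : ℝ) : EReal)

theorem IsProx.ne_top {g : E → EReal} {τ : ℝ} {u v w : E}
    (hv : IsProx g τ u v) (hw : g w ≠ ⊤) : g v ≠ ⊤ := by
  intro hgv
  have hle := hv w
  rw [hgv, EReal.top_add_coe, top_le_iff] at hle
  exact EReal.add_ne_top hw (EReal.coe_ne_top _) hle

variable [InnerProductSpace ℝ E]

theorem scaled_norm_sub_gradient_step_sq {τ : ℝ} (hτ : τ ≠ 0) (z p w : E) :
    1 / (2 * τ) * ‖w - (z - τ • p)‖ ^ 2 =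
      ⟪p, w - z⟫ + 1 / (2 * τ) * ‖w - z‖ ^ 2 + τ / 2 * ‖p‖ ^ 2 := by
  have hstep : w - (z - τ • p) = (w - z) + τ • p := by abel
  rw [hstep, norm_add_sq_real, real_inner_smul_right, norm_smul, mul_pow, Real.norm_eq_abs, sq_abs,
    real_inner_comm]
  field_simp
  ring

theorem IsProx.add_inner_add_sq_le {g : E → EReal} {τ : ℝ} {z p v : E} (hτ : τ ≠ 0)
    (hv : IsProx g τ (z - τ • p) v) :
    g v + ((⟪p, v - z⟫ + 1 / (2 * τ) * ‖v - z‖ ^ 2 : ℝ) : EReal) ≤ g z := by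
  have hle := hv z
  have hz : 1 / (2 * τ) * ‖z - (z - τ • p)‖ ^ 2 = τ / 2 * ‖p‖ ^ 2 := by
    rw [scaled_norm_sub_gradient_step_sq hτ]
    simp
  rw [hz, scaled_norm_sub_gradient_step_sq hτ, EReal.coe_add, ← add_assoc] at hle
  exact (EReal.addLECancellable_coe _).add_le_add_iff_right.1 hle

end Prox

theorem stmt14_general {E : Type*} [NormedAddCommGroup E] [InnerProductSpace ℝ E] [CompleteSpace E]
    {g : E → EReal} (hg_bot : ∀ x, g x ≠ ⊥) (hg_top : ∃ x, g x ≠ ⊤)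
    {h : E → ℝ} {h' : E → E} {L τ : ℝ} (hτ : τ ≠ 0) {z v : E}
    (hgrad : ∀ x, HasGradientAt h (h' x) x)
    (hlip : ∀ x, ‖h' x - h' z‖ ≤ L * ‖x - z‖)
    (hv : IsProx g τ (z - τ • h' z) v) :
    (((1 / (2 * τ) - L / 2) * ‖v - z‖ ^ 2 : ℝ) : EReal) ≤ (h z + g z) - (h v + g v) := by
  obtain ⟨w, hw⟩ := hg_top
  have hdescent := le_add_inner_add_sq_of_lipschitz_gradient hgrad hlip v
  have hprox := hv.add_inner_add_sq_le hτ
  lift g v to ℝ using ⟨hv.ne_top hw, hg_bot v⟩ with gv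
  rw [EReal.le_sub_iff_add_le (by simp [← EReal.coe_add]) (by simp [← EReal.coe_add])]
  calc _ ≤ ((h z + (gv + (⟪h' z, v - z⟫ + 1 / (2 * τ) * ‖v - z‖ ^ 2)) : ℝ) : EReal) := by
        norm_cast
        linarith
    _ ≤ h z + g z := by
        push_cast at hprox ⊢
        gcongr

theorem gfun_zero {m : ℕ} (μ : ℝ) : gfun μ (0 : EuclideanSpace ℝ (Fin m)) = 0 := by
  simp [gfun, zeroNorm]

/-- sufficient descent of the proximal gradient step,
`F(z) − F(v) ≥ (1/(2τ) − ℓ_h/2)‖v − z‖²` in `ℝ ∪ {+∞}`. -/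
theorem stmt14 {m : ℕ} (μ ℓh τ : ℝ) (hμ : 0 < μ) (hℓ : 0 < ℓh)
    (hτ0 : 0 < τ) (hτ : τ < 1 / ℓh)
    (h : EuclideanSpace ℝ (Fin m) → ℝ)
    (h' : EuclideanSpace ℝ (Fin m) → EuclideanSpace ℝ (Fin m))
    (hdiff : ∀ z, HasGradientAt h (h' z) z)
    (hlip : ∀ x y, ‖h' x - h' y‖ ≤ ℓh * ‖x - y‖)
    (z v : EuclideanSpace ℝ (Fin m))
    (hv : v ∈ proxSet μ τ (z - τ • h' z)) :
    (((1 / (2 * τ) - ℓh / 2) * ‖v - z‖ ^ 2 : ℝ) : EReal) ≤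
      ((h z : EReal) + gfun μ z) - ((h v : EReal) + gfun μ v) := by
  have hproper : ∃ x : EuclideanSpace ℝ (Fin m), gfun μ x ≠ ⊤ := ⟨0, by simp [gfun_zero]⟩
  exact stmt14_general (gfun_ne_bot μ) hproper hτ0.ne' hdiff (fun x ↦ hlip x z) hv
end

section
/- Let F : ℝ^m → ℝ ∪ {+∞}, let {z^k} and {v^k} be sequences in ℝ^m with F(z^0) < +∞, and let η₀, c₁ > 0. Suppose for all k: F(z^k) − F(v^k) ≥ η₀‖v^k − z^k‖² and F(v^k) − F(z^{k+1}) ≥ c₁‖v^k − z^{k+1}‖², and that { F(z^k) } is bounded below. Then there exists C ∈ ℝ such that lim_{k→∞} F(z^k) = lim_{k→∞} F(v^k) = C, and moreover ‖v^k − z^k‖ → 0 and ‖v^k − z^{k+1}‖ → 0 as k → ∞. -/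
open Filter Topology

/-!
The two descent inequalities interlace the values, `F(zᵏ⁺¹) ≤ F(vᵏ) ≤ F(zᵏ)`, so `F(zᵏ)` decreases
to a limit, which is real because it lies between the lower bound and `F(z⁰)`, and `F(vᵏ)` is
squeezed to the same limit. The squared distances are dominated by the gaps between consecutive
values, which therefore tend to `0`.
-/

section Convergence

variable {α : Type*} {l : Filter α}

lemma exists_real_tendsto_of_antitone [Preorder α] {a : α → EReal} (ha : Antitone a) {i₀ : α}
    (hi₀ : a i₀ < ⊤) {B : ℝ} (hB : ∀ i, (B : EReal) ≤ a i) :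
    ∃ C : ℝ, Tendsto a atTop (𝓝 (C : EReal)) := by
  have inf_ne_top : ⨅ i, a i ≠ ⊤ := ((iInf_le a i₀).trans_lt hi₀).ne
  have inf_ne_bot : ⨅ i, a i ≠ ⊥ := ((EReal.bot_lt_coe B).trans_le (le_iInf hB)).ne'
  refine ⟨(⨅ i, a i).toReal, ?_⟩
  rw [EReal.coe_toReal inf_ne_top inf_ne_bot]
  exact tendsto_atTop_iInf ha

lemma tendsto_of_succ_le_of_le {β : Type*} [TopologicalSpace β] [Preorder β] [OrderTopology β]
    {a b : ℕ → β} {x : β} (hab : ∀ k, a (k + 1) ≤ b k) (hba : ∀ k, b k ≤ a k)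
    (ha : Tendsto a atTop (𝓝 x)) : Tendsto b atTop (𝓝 x) :=
  tendsto_of_tendsto_of_tendsto_of_le_of_le ((tendsto_add_atTop_iff_nat 1).2 ha) ha hab hba

lemma tendsto_sub_nhds_zero_of_tendsto_coe {a b : α → EReal} {C : ℝ}
    (ha : Tendsto a l (𝓝 (C : EReal))) (hb : Tendsto b l (𝓝 (C : EReal))) :
    Tendsto (fun i => a i - b i) l (𝓝 0) := by
  have continuousAt_add : ContinuousAt (fun p : EReal × EReal => p.1 + p.2) (C, -C) :=
    EReal.continuousAt_add (.inl (EReal.coe_ne_top C)) (.inl (EReal.coe_ne_bot C))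
  have add_neg_tendsto := continuousAt_add.tendsto.comp (ha.prodMk_nhds hb.neg)
  rwa [← sub_eq_add_neg, EReal.sub_self (EReal.coe_ne_top C) (EReal.coe_ne_bot C)]
    at add_neg_tendsto

lemma tendsto_nhds_zero_of_add_coe_le {a b : α → EReal} {r : α → ℝ} {C : ℝ} (hr : ∀ i, 0 ≤ r i)
    (hle : ∀ i, b i + (r i : EReal) ≤ a i) (ha : Tendsto a l (𝓝 (C : EReal)))
    (hb : Tendsto b l (𝓝 (C : EReal))) : Tendsto r l (𝓝 0) := by
  -- Moving `b i` across the inequality is legitimate only where `b i` is finite.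
  have le_gap : ∀ᶠ i in l, (r i : EReal) ≤ a i - b i := by
    filter_upwards [hb.eventually_ne (EReal.coe_ne_bot C), hb.eventually_ne (EReal.coe_ne_top C)]
      with i ne_bot ne_top
    rw [EReal.le_sub_iff_add_le (.inl ne_bot) (.inl ne_top), add_comm]
    exact hle i
  rw [← EReal.tendsto_coe]
  exact tendsto_of_tendsto_of_tendsto_of_le_of_le' tendsto_const_nhds
    (tendsto_sub_nhds_zero_of_tendsto_coe ha hb)
    (.of_forall fun i => EReal.coe_nonneg.2 (hr i)) le_gap

lemma tendsto_nhds_zero_of_tendsto_const_mul_sq {c : ℝ} (hc : c ≠ 0) {d : α → ℝ}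
    (h : Tendsto (fun i => c * d i ^ 2) l (𝓝 0)) : Tendsto d l (𝓝 0) := by
  have sq_tendsto : Tendsto (fun i => d i ^ 2) l (𝓝 0) := by
    simpa only [mul_zero, inv_mul_cancel_left₀ hc] using h.const_mul c⁻¹
  have abs_tendsto : Tendsto (fun i => |d i|) l (𝓝 0) := by
    simpa only [Real.sqrt_sq_eq_abs, Real.sqrt_zero] using sq_tendsto.sqrt
  exact (tendsto_zero_iff_abs_tendsto_zero d).2 abs_tendsto

end Convergence

theorem stmt16_general {X : Type*} [PseudoMetricSpace X] (F : X → EReal) (z v : ℕ → X)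
    {η₀ c₁ : ℝ} (hη : 0 < η₀) (hc : 0 < c₁) (hfin : F (z 0) < ⊤)
    (h1 : ∀ k, F (v k) + ((η₀ * dist (v k) (z k) ^ 2 : ℝ) : EReal) ≤ F (z k))
    (h2 : ∀ k, F (z (k + 1)) + ((c₁ * dist (v k) (z (k + 1)) ^ 2 : ℝ) : EReal) ≤ F (v k))
    (hbdd : ∃ B : ℝ, ∀ k, (B : EReal) ≤ F (z k)) :
    ∃ C : ℝ,
      Tendsto (fun k => F (z k)) atTop (𝓝 (C : EReal)) ∧
      Tendsto (fun k => F (v k)) atTop (𝓝 (C : EReal)) ∧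
      Tendsto (fun k => dist (v k) (z k)) atTop (𝓝 0) ∧
      Tendsto (fun k => dist (v k) (z (k + 1))) atTop (𝓝 0) := by
  obtain ⟨B, hB⟩ := hbdd
  have nonneg_zv : ∀ k, 0 ≤ η₀ * dist (v k) (z k) ^ 2 := fun k => by positivity
  have nonneg_vz : ∀ k, 0 ≤ c₁ * dist (v k) (z (k + 1)) ^ 2 := fun k => by positivity
  have v_le_z : ∀ k, F (v k) ≤ F (z k) := fun k =>
    le_of_add_le_of_nonneg_left (h1 k) (EReal.coe_nonneg.2 (nonneg_zv k))
  have z_succ_le_v : ∀ k, F (z (k + 1)) ≤ F (v k) := fun k =>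
    le_of_add_le_of_nonneg_left (h2 k) (EReal.coe_nonneg.2 (nonneg_vz k))
  have z_antitone : Antitone fun k => F (z k) :=
    antitone_nat_of_succ_le fun k => (z_succ_le_v k).trans (v_le_z k)
  obtain ⟨C, z_tendsto⟩ := exists_real_tendsto_of_antitone z_antitone hfin hB
  have z_succ_tendsto := (tendsto_add_atTop_iff_nat 1).2 z_tendsto
  have v_tendsto := tendsto_of_succ_le_of_le z_succ_le_v v_le_z z_tendsto
  exact ⟨C, z_tendsto, v_tendsto,
    tendsto_nhds_zero_of_tendsto_const_mul_sq hη.ne'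
      (tendsto_nhds_zero_of_add_coe_le nonneg_zv h1 z_tendsto v_tendsto),
    tendsto_nhds_zero_of_tendsto_const_mul_sq hc.ne'
      (tendsto_nhds_zero_of_add_coe_le nonneg_vz h2 v_tendsto z_succ_tendsto)⟩

/-- if `F(z⁰) < +∞`, the sufficient-descent inequalities
`F(zᵏ) − F(vᵏ) ≥ η₀‖vᵏ − zᵏ‖²` and `F(vᵏ) − F(zᵏ⁺¹) ≥ c₁‖vᵏ − zᵏ⁺¹‖²` hold, and
`{F(zᵏ)}` is bounded below, then both function-value sequences converge to a common
real limit `C` and the successive changes `‖vᵏ − zᵏ‖`, `‖vᵏ − zᵏ⁺¹‖` tend to `0`. -/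
theorem stmt16 {m : ℕ} (F : EuclideanSpace ℝ (Fin m) → EReal)
    (z v : ℕ → EuclideanSpace ℝ (Fin m)) (η₀ c₁ : ℝ)
    (hη : 0 < η₀) (hc : 0 < c₁)
    (hfin : F (z 0) < ⊤)
    (h1 : ∀ k, F (v k) + ((η₀ * ‖v k - z k‖ ^ 2 : ℝ) : EReal) ≤ F (z k))
    (h2 : ∀ k, F (z (k + 1)) + ((c₁ * ‖v k - z (k + 1)‖ ^ 2 : ℝ) : EReal) ≤ F (v k))
    (hbdd : ∃ B : ℝ, ∀ k, (B : EReal) ≤ F (z k)) :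
    ∃ C : ℝ,
      Tendsto (fun k => F (z k)) atTop (𝓝 (C : EReal)) ∧
      Tendsto (fun k => F (v k)) atTop (𝓝 (C : EReal)) ∧
      Tendsto (fun k => ‖v k - z k‖) atTop (𝓝 0) ∧
      Tendsto (fun k => ‖v k - z (k + 1)‖) atTop (𝓝 0) := by
  simp only [← dist_eq_norm] at h1 h2 ⊢
  exact stmt16_general F z v hη hc hfin h1 h2 hbdd
end

section
/- Let h : ℝ^m → ℝ be continuously differentiable and τ > 0. Let {z^k} and {v^k} be sequences in ℝ^m with v^k ∈ Prox_{τg}(z^k − τ∇h(z^k)) for all k, z^k → z* as k → ∞, and ‖v^k − z^k‖ → 0. Then z* ∈ Prox_{τg}(z* − τ∇h(z*)), i.e. z* is a P-stationary point of min h + g with parameter τ. -/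
open scoped RealInnerProductSpace
open Filter Topology

/-!
The function `g` is lower semicontinuous: near `z` no nonzero coordinate of `z` can vanish, so
`‖·‖₀` can only jump up, and the nonnegative orthant is closed. Minimizers of a lower semicontinuous
objective that depends continuously on a parameter form a closed set of pairs
(minimizer, parameter). Since `vᵏ → z*` and `zᵏ − τ∇h(zᵏ) → z* − τ∇h(z*)`, the claim is this
closedness for `Prox_{τg}`.
-/

section LowerSemicontinuity

variable {X Y : Type*} [TopologicalSpace X] [TopologicalSpace Y]

theorem isClosed_setOf_forall_le_of_lowerSemicontinuous {γ : Type*} [LinearOrder γ]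
    [TopologicalSpace γ] [ClosedIciTopology γ] {F : X × Y → γ} (hF : LowerSemicontinuous F)
    (hF_right : ∀ w, Continuous fun y => F (w, y)) :
    IsClosed {p : X × Y | ∀ w, F p ≤ F (w, p.2)} := by
  rw [Set.ofPred_forall]
  exact isClosed_iInter fun w =>
    hF.isClosed_epigraph.preimage (continuous_id.prodMk ((hF_right w).comp continuous_snd))

theorem continuousAt_ereal_add_coe (a : EReal) (r : ℝ) :
    ContinuousAt (fun p : EReal × EReal => p.1 + p.2) (a, r) :=
  EReal.continuousAt_add (.inr (EReal.coe_ne_bot r)) (.inr (EReal.coe_ne_top r))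

theorem isClosed_setOf_forall_add_coe_le {g : X → EReal} (hg : LowerSemicontinuous g)
    {φ : X × Y → ℝ} (hφ : Continuous φ) :
    IsClosed {p : X × Y | ∀ w, g p.1 + (φ p : EReal) ≤ g w + (φ (w, p.2) : EReal)} := by
  have hφ_coe : Continuous fun p => (φ p : EReal) := continuous_coe_real_ereal.comp hφ
  refine isClosed_setOf_forall_le_of_lowerSemicontinuous (F := fun p => g p.1 + (φ p : EReal))
    ?_ fun w => ?_
  · exact (hg.comp continuous_fst).add' hφ_coe.lowerSemicontinuous
      fun p => continuousAt_ereal_add_coe (g p.1) (φ p)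
  · exact continuous_iff_continuousAt.2 fun y =>
      (continuousAt_ereal_add_coe (g w) (φ (w, y))).comp₂ continuousAt_const
        (hφ_coe.comp (Continuous.prodMk_right w)).continuousAt

theorem lowerSemicontinuous_piecewise_top {β : Type*} [Preorder β] [OrderTop β] {s : Set X}
    [DecidablePred (· ∈ s)] (hs : IsClosed s) {f : X → β} (hf : LowerSemicontinuousOn f s) :
    LowerSemicontinuous (s.piecewise f ⊤) := by
  intro x b hb
  by_cases hx : x ∈ s
  · rw [Set.piecewise_eq_of_mem _ _ _ hx] at hb
    filter_upwards [eventually_nhdsWithin_iff.1 (hf x hx b hb)] with x' hx'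
    by_cases h_mem : x' ∈ s
    · simpa [h_mem] using hx' h_mem
    · simpa [h_mem] using hb.trans_le le_top
  · rw [Set.piecewise_eq_of_notMem _ _ _ hx] at hb
    filter_upwards [hs.isOpen_compl.mem_nhds hx] with x' hx'
    rwa [Set.piecewise_eq_of_notMem _ _ _ hx']

end LowerSemicontinuity

section NonnegativeSparsity

variable {m : ℕ}

theorem lowerSemicontinuous_zeroNorm :
    LowerSemicontinuous (zeroNorm : EuclideanSpace ℝ (Fin m) → ℕ) := by
  intro z n hn
  have support_subset : ∀ᶠ z' in 𝓝 z, ∀ i, z i ≠ 0 → z' i ≠ 0 :=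
    eventually_all.2 fun i => eventually_imp_distrib_left.2 fun hi =>
      (EuclideanSpace.proj (𝕜 := ℝ) i).continuous.continuousAt.eventually_ne hi
  filter_upwards [support_subset] with z' hz'
  exact hn.trans_le (Finset.card_le_card (Finset.monotone_filter_right _ fun i _ => hz' i))

theorem isClosed_setOf_forall_nonneg :
    IsClosed {z : EuclideanSpace ℝ (Fin m) | ∀ i, 0 ≤ z i} := by
  rw [Set.ofPred_forall]
  exact isClosed_iInter fun i =>
    isClosed_le continuous_const (EuclideanSpace.proj (𝕜 := ℝ) i).continuous

open Classical in
theorem gfun_eq_piecewise (μ : ℝ) :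
    gfun μ = {z : EuclideanSpace ℝ (Fin m) | ∀ i, 0 ≤ z i}.piecewise
      (fun z => ((μ * zeroNorm z : ℝ) : EReal)) ⊤ := by
  ext z
  simp [gfun, Set.piecewise]

theorem lowerSemicontinuous_gfun {μ : ℝ} (hμ : 0 ≤ μ) :
    LowerSemicontinuous (gfun μ : EuclideanSpace ℝ (Fin m) → EReal) := by
  have mul_mono : Monotone fun n : ℕ => ((μ * n : ℝ) : EReal) := fun a b hab =>
    EReal.coe_le_coe (by gcongr)
  have penalty_lsc :
      LowerSemicontinuous fun z : EuclideanSpace ℝ (Fin m) => ((μ * zeroNorm z : ℝ) : EReal) :=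
    Continuous.comp_lowerSemicontinuous (g := fun n : ℕ => ((μ * n : ℝ) : EReal))
      continuous_of_discreteTopology lowerSemicontinuous_zeroNorm mul_mono
  rw [gfun_eq_piecewise]
  exact lowerSemicontinuous_piecewise_top isClosed_setOf_forall_nonneg
    (penalty_lsc.lowerSemicontinuousOn _)

theorem isClosed_setOf_mem_proxSet {μ : ℝ} (hμ : 0 ≤ μ) (τ : ℝ) :
    IsClosed {p : EuclideanSpace ℝ (Fin m) × EuclideanSpace ℝ (Fin m) |
      p.1 ∈ proxSet μ τ p.2} :=
  isClosed_setOf_forall_add_coe_le (lowerSemicontinuous_gfun hμ)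
    (φ := fun p => 1 / (2 * τ) * ‖p.1 - p.2‖ ^ 2) (by fun_prop)

end NonnegativeSparsity

/-- stability of P-stationarity under limits: if
`vᵏ ∈ Prox_{τg}(zᵏ − τ∇h(zᵏ))`, `zᵏ → z*` and `‖vᵏ − zᵏ‖ → 0`, then
`z* ∈ Prox_{τg}(z* − τ∇h(z*))`. -/
theorem stmt17 {m : ℕ} (μ τ : ℝ) (hμ : 0 < μ) (hτ : 0 < τ)
    (h : EuclideanSpace ℝ (Fin m) → ℝ)
    (h' : EuclideanSpace ℝ (Fin m) → EuclideanSpace ℝ (Fin m))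
    (hdiff : ∀ z, HasGradientAt h (h' z) z)
    (hcont : Continuous h')
    (z v : ℕ → EuclideanSpace ℝ (Fin m))
    (zstar : EuclideanSpace ℝ (Fin m))
    (hv : ∀ k, v k ∈ proxSet μ τ (z k - τ • h' (z k)))
    (hz : Tendsto z atTop (𝓝 zstar))
    (hvz : Tendsto (fun k => ‖v k - z k‖) atTop (𝓝 0)) :
    zstar ∈ proxSet μ τ (zstar - τ • h' zstar) := by
  have hv_lim : Tendsto v atTop (𝓝 zstar) := by
    simpa using (tendsto_zero_iff_norm_tendsto_zero.2 hvz).add hz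
  have hu_lim : Tendsto (fun k => z k - τ • h' (z k)) atTop (𝓝 (zstar - τ • h' zstar)) :=
    hz.sub (((hcont.tendsto zstar).comp hz).const_smul τ)
  exact (isClosed_setOf_mem_proxSet hμ.le τ).mem_of_tendsto (hv_lim.prodMk_nhds hu_lim)
    (Eventually.of_forall hv)
end

section
/- Let {y^j}_{j≥0} be a sequence in ℝ^m, C ∈ ℝ, s > 0, η₁, η₂ > 0, and let ψ : [0, s) → ℝ be concave and continuous with ψ(0) = 0, continuously differentiable on (0, s) with ψ'(t) > 0 for all t ∈ (0, s). Let a_j be a real sequence with: (a) a_j − a_{j+1} ≥ η₂‖y^{j+1} − y^j‖² for all j; (b) C < a_j < C + s for all j and a_j → C; and (c) ψ'(a_j − C)·η₁‖y^j − y^{j−1}‖ ≥ 1 for all j ≥ 1. Then Σ_{j=0}^{∞} ‖y^{j+1} − y^j‖ < ∞; in particular {y^j} is a Cauchy sequence and converges in ℝ^m. -/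
open Filter Topology

/-!
Write `d j` for the length of the `j`-th step. Concavity of `ψ` bounds the decrease of `ψ (a j - C)`
below by `ψ' (a j - C) * (a j - a (j + 1))`, so descent and the error bound give
`d j ^ 2 ≤ d (j - 1) * (η₁ / η₂ * (ψ (a j - C) - ψ (a (j + 1) - C)))`. By AM-GM,
`2 * d j ≤ d (j - 1) + η₁ / η₂ * (ψ (a j - C) - ψ (a (j + 1) - C))`: each step is at most the
decrease of the potential `d (j - 1) + η₁ / η₂ * ψ (a j - C)`, which is bounded below, and the
decreases telescope.
-/

theorem summable_of_le_sub_succ {x φ : ℕ → ℝ} {c : ℝ} (hx : ∀ n, 0 ≤ x n)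
    (hstep : ∀ n, x n ≤ φ n - φ (n + 1)) (hφ : ∀ n, c ≤ φ n) : Summable x := by
  refine summable_of_sum_range_le (c := φ 0 - c) hx fun n => ?_
  calc ∑ i ∈ Finset.range n, x i
      ≤ ∑ i ∈ Finset.range n, (φ i - φ (i + 1)) := Finset.sum_le_sum fun i _ => hstep i
    _ = φ 0 - φ n := Finset.sum_range_sub' φ n
    _ ≤ φ 0 - c := sub_le_sub_left (hφ n) _

section Concave

variable {S : Set ℝ} {ψ : ℝ → ℝ} {t u q : ℝ}

theorem concaveOn_mul_sub_le_sub_of_hasDerivAt (hψ : ConcaveOn ℝ S ψ) (ht : t ∈ S) (hu : u ∈ S)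
    (hq : HasDerivAt ψ q t) : q * (t - u) ≤ ψ t - ψ u := by
  rcases lt_trichotomy u t with hut | rfl | htu
  · have hslope := hψ.le_slope_of_hasDerivAt hu ht hut hq
    rwa [slope_def_field, le_div_iff₀ (sub_pos.2 hut)] at hslope
  · simp
  · have hslope := hψ.slope_le_of_hasDerivAt ht hu htu hq
    rw [slope_def_field, div_le_iff₀ (sub_pos.2 htu)] at hslope
    linarith

theorem concaveOn_le_of_hasDerivAt_nonneg (hψ : ConcaveOn ℝ S ψ) (ht : t ∈ S) (hu : u ∈ S)
    (hq : HasDerivAt ψ q t) (hq_nonneg : 0 ≤ q) (hut : u ≤ t) : ψ u ≤ ψ t :=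
  sub_nonneg.1 <| (mul_nonneg hq_nonneg (sub_nonneg.2 hut)).trans <|
    concaveOn_mul_sub_le_sub_of_hasDerivAt hψ ht hu hq

theorem two_mul_le_add_of_descent_of_one_le_deriv_mul {η₁ η₂ d e : ℝ} (hψ : ConcaveOn ℝ S ψ)
    (ht : t ∈ S) (hu : u ∈ S) (hq : HasDerivAt ψ q t) (hη₁ : 0 ≤ η₁) (hη₂ : 0 < η₂) (he : 0 ≤ e)
    (hdescent : η₂ * d ^ 2 ≤ t - u) (herror : 1 ≤ q * (η₁ * e)) :
    2 * d ≤ e + η₁ / η₂ * (ψ t - ψ u) := by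
  have hq_nonneg : 0 ≤ q := (pos_of_mul_pos_left (one_pos.trans_le herror) (by positivity)).le
  have hdecrease : q * (η₂ * d ^ 2) ≤ ψ t - ψ u :=
    (mul_le_mul_of_nonneg_left hdescent hq_nonneg).trans
      (concaveOn_mul_sub_le_sub_of_hasDerivAt hψ ht hu hq)
  have hdecrease_nonneg : 0 ≤ ψ t - ψ u := le_trans (by positivity) hdecrease
  have hsq : d ^ 2 ≤ e * (η₁ / η₂ * (ψ t - ψ u)) :=
    calc d ^ 2 ≤ q * (η₁ * e) * d ^ 2 := le_mul_of_one_le_left (sq_nonneg d) herror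
      _ = e * (η₁ / η₂ * (q * (η₂ * d ^ 2))) := by field_simp
      _ ≤ e * (η₁ / η₂ * (ψ t - ψ u)) := by gcongr
  exact two_mul_le_add_of_sq_le_mul he (by positivity) hsq

end Concave

theorem summable_dist_of_descent_of_one_le_deriv_mul {X : Type*} [PseudoMetricSpace X]
    {y : ℕ → X} {a : ℕ → ℝ} {C s η₁ η₂ : ℝ} {ψ ψ' : ℝ → ℝ} (hη₁ : 0 < η₁) (hη₂ : 0 < η₂)
    (hconc : ConcaveOn ℝ (Set.Ico 0 s) ψ)
    (hderiv : ∀ t ∈ Set.Ioo 0 s, HasDerivAt ψ (ψ' t) t)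
    (hdescent : ∀ j, η₂ * dist (y j) (y (j + 1)) ^ 2 ≤ a j - a (j + 1))
    (hvalue : ∀ j, C < a j ∧ a j < C + s)
    (herror : ∀ j, 1 ≤ ψ' (a (j + 1) - C) * (η₁ * dist (y j) (y (j + 1)))) :
    Summable fun j => dist (y j) (y (j + 1)) := by
  have hgap (j : ℕ) : a j - C ∈ Set.Ioo 0 s :=
    ⟨sub_pos.2 (hvalue j).1, sub_lt_iff_lt_add'.2 (hvalue j).2⟩
  have hgap' (j : ℕ) : a j - C ∈ Set.Ico 0 s := Set.Ioo_subset_Ico_self (hgap j)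
  rw [← summable_nat_add_iff 1]
  refine summable_of_le_sub_succ (c := η₁ / η₂ * ψ 0)
    (φ := fun j => dist (y j) (y (j + 1)) + η₁ / η₂ * ψ (a (j + 1) - C))
    (fun _ => dist_nonneg) (fun j => ?_) fun j => ?_
  · have hstep := two_mul_le_add_of_descent_of_one_le_deriv_mul hconc (hgap' (j + 1))
      (hgap' (j + 2)) (hderiv _ (hgap _)) hη₁.le hη₂ dist_nonneg
      ((hdescent (j + 1)).trans_eq (sub_sub_sub_cancel_right _ _ C).symm) (herror j)
    linarith
  · have hψ'_nonneg : 0 ≤ ψ' (a (j + 1) - C) :=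
      (pos_of_mul_pos_left (one_pos.trans_le (herror j)) (by positivity)).le
    have hψ_zero_le : ψ 0 ≤ ψ (a (j + 1) - C) :=
      concaveOn_le_of_hasDerivAt_nonneg hconc (hgap' (j + 1))
        ⟨le_rfl, (hgap 0).1.trans (hgap 0).2⟩ (hderiv _ (hgap _)) hψ'_nonneg (hgap _).1.le
    exact le_add_of_nonneg_of_le dist_nonneg (by gcongr)

theorem stmt18_general {X : Type*} [PseudoMetricSpace X] [CompleteSpace X]
    {y : ℕ → X} {a : ℕ → ℝ} {C s η₁ η₂ : ℝ} {ψ ψ' : ℝ → ℝ} (hη₁ : 0 < η₁) (hη₂ : 0 < η₂)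
    (hconc : ConcaveOn ℝ (Set.Ico 0 s) ψ)
    (hderiv : ∀ t ∈ Set.Ioo 0 s, HasDerivAt ψ (ψ' t) t)
    (hdescent : ∀ j, η₂ * dist (y j) (y (j + 1)) ^ 2 ≤ a j - a (j + 1))
    (hvalue : ∀ j, C < a j ∧ a j < C + s)
    (herror : ∀ j, 1 ≤ ψ' (a (j + 1) - C) * (η₁ * dist (y j) (y (j + 1)))) :
    (Summable fun j => dist (y j) (y (j + 1))) ∧ CauchySeq y ∧
      ∃ ylim, Tendsto y atTop (𝓝 ylim) := by
  have hsum := summable_dist_of_descent_of_one_le_deriv_mul hη₁ hη₂ hconc hderiv hdescent hvalue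
    herror
  have hcauchy := cauchySeq_of_summable_dist hsum
  exact ⟨hsum, hcauchy, cauchySeq_tendsto_of_complete hcauchy⟩

/-- finite length of a sequence satisfying sufficient descent, a
relative error bound and a PŁK inequality with desingularizing function `ψ`:
the total length `Σ ‖y^{j+1} − y^j‖` is finite, so `{y^j}` is Cauchy and converges. -/
theorem stmt18 {m : ℕ} (y : ℕ → EuclideanSpace ℝ (Fin m)) (a : ℕ → ℝ)
    (C s η₁ η₂ : ℝ) (hs : 0 < s) (hη₁ : 0 < η₁) (hη₂ : 0 < η₂)
    (ψ ψ' : ℝ → ℝ)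
    (hconc : ConcaveOn ℝ (Set.Ico 0 s) ψ)
    (hcont : ContinuousOn ψ (Set.Ico 0 s))
    (hψ0 : ψ 0 = 0)
    (hderiv : ∀ t ∈ Set.Ioo (0 : ℝ) s, HasDerivAt ψ (ψ' t) t)
    (hψ'cont : ContinuousOn ψ' (Set.Ioo 0 s))
    (hψ'pos : ∀ t ∈ Set.Ioo (0 : ℝ) s, 0 < ψ' t)
    (ha1 : ∀ j, η₂ * ‖y (j + 1) - y j‖ ^ 2 ≤ a j - a (j + 1))
    (ha2 : ∀ j, C < a j ∧ a j < C + s)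
    (ha3 : Tendsto a atTop (𝓝 C))
    (ha4 : ∀ j, 1 ≤ j → 1 ≤ ψ' (a j - C) * (η₁ * ‖y j - y (j - 1)‖)) :
    Summable (fun j => ‖y (j + 1) - y j‖) ∧ CauchySeq y ∧
      ∃ ylim, Tendsto y atTop (𝓝 ylim) := by
  simp only [← dist_eq_norm'] at ha1 ha4 ⊢
  exact stmt18_general hη₁ hη₂ hconc hderiv ha1 ha2 fun j => ha4 (j + 1) (Nat.le_add_left 1 j)
end
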